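/- If X is an m×n totally positive real matrix and T is the output of Cauchon's Algorithm applied to X, then X_Γ(T) = X; that is, the output of Cauchon's Algorithm is the Γ-scaffolding of X. -/

import Mathlib

/-!
The steps of Cauchon's Algorithm can be undone row by row, and undoing them adds the weights of
the Γ-paths one last turn at a time.

Write `T` for the output and `Y_c` for the matrix obtained once the rows of (0-based) index at
least `c` have been processed. Row `i` no longer changes after the rows below it have been
processed (`cauchonSeq_row_stable`), so during the processing of row `i` all its entries already
equal those of `T`. Column `j` no longer changes in that phase once the columns to its right
have been used (`cauchonSeq_col_stable`). Summing the steps of row `i` therefore gives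
(`cauchonSeq_full_row`), for `k < i`,

  `Y_{i+1}(k,l) = Y_i(k,l) + ∑_{j>l} Y_i(k,j) * (t_{ij}⁻¹ * t_{il})`.

Let `P_c(k,l)` (`truncSum`) be the total weight of the Γ-paths from row `k` to column `l` whose
turns all lie in rows above row `c`. Separating the paths whose last turn is in row `i` shows that
`P` obeys the same recurrence (`truncSum_succ`), and `P_{k+1}(k,l) = t_{kl} = Y_{k+1}(k,l)`. Hence
`P_c(k,l) = Y_c(k,l)` for `k < c ≤ m`, and `c = m` is the assertion.

Both recurrences involve the same symbols `t_{ij}⁻¹` and never use `t_{ij} * t_{ij}⁻¹ = 1`, so the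
argument does not have to exclude vanishing pivots.
-/

open Finset

/-- A real matrix is totally positive if every minor (determinant of a square submatrix
obtained by selecting rows and columns in increasing order) is positive. -/
def TotallyPositive {m n : ℕ} (A : Matrix (Fin m) (Fin n) ℝ) : Prop :=
  ∀ (r : ℕ) (f : Fin r → Fin m) (g : Fin r → Fin n),
    StrictMono f → StrictMono g → 0 < (A.submatrix f g).det

/-- A matrix is (strongly) positive if all of its entries are positive. -/
def EntrywisePos {m n : ℕ} (A : Matrix (Fin m) (Fin n) ℝ) : Prop :=
  ∀ i j, 0 < A i j

/-- The weight of the Γ-path encoded by the pair of finsets `(I, J)`.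
A Γ-path with Γ-turns `(i₁,j₁), …, (i_p,j_p)`, where `i₁ < i₂ < ⋯ < i_p` and
`j₁ > j₂ > ⋯ > j_p`, corresponds to the pair `I = {i₁,…,i_p}`, `J = {j₁,…,j_p}`;
the path runs from row vertex `i₁ = min I` to column vertex `j_p = min J`.
Its weight is `t_{i₁j₁} · ∏_{s=1}^{p−1} t_{i_{s+1} j_s}⁻¹ · t_{i_{s+1} j_{s+1}}`. -/
noncomputable def gammaWeight {m n : ℕ} (T : Matrix (Fin m) (Fin n) ℝ)
    (I : Finset (Fin m)) (J : Finset (Fin n)) : ℝ :=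
  if h : I.Nonempty ∧ J.Nonempty ∧ I.card = J.card then
    let p := I.card
    let row : ℕ → Fin m := fun s => (I.sort (· ≤ ·)).getD s (I.min' h.1)
    let col : ℕ → Fin n := fun s => (J.sort (· ≤ ·)).getD (p - 1 - s) (J.min' h.2.1)
    T (row 0) (col 0) *
      ∏ s ∈ Finset.range (p - 1),
        ((T (row (s + 1)) (col s))⁻¹ * T (row (s + 1)) (col (s + 1)))
  else 0

/-- The Γ-path-sum matrix `X_Γ(T)`: its `(i,j)` entry is the sum of the weights of all
Γ-paths from row vertex `i` to column vertex `j`. -/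
noncomputable def XGamma {m n : ℕ} (T : Matrix (Fin m) (Fin n) ℝ) :
    Matrix (Fin m) (Fin n) ℝ :=
  Matrix.of fun i j =>
    ∑ I ∈ Finset.univ.filter (fun I : Finset (Fin m) => I.min = (i : WithTop (Fin m))),
      ∑ J ∈ Finset.univ.filter (fun J : Finset (Fin n) =>
          J.min = (j : WithTop (Fin n)) ∧ J.card = I.card),
        gammaWeight T I J

/-- The weight of the L-path encoded by the pair of finsets `(I, J)`.
An L-path with turns `(i₁,j₁), …, (i_p,j_p)`, where `i₁ > i₂ > ⋯ > i_p` and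
`j₁ < j₂ < ⋯ < j_p`, corresponds to `I = {i₁,…,i_p}`, `J = {j₁,…,j_p}`;
the path runs from row vertex `i₁ = max I` to column vertex `j_p = max J`. -/
noncomputable def lWeight {m n : ℕ} (T : Matrix (Fin m) (Fin n) ℝ)
    (I : Finset (Fin m)) (J : Finset (Fin n)) : ℝ :=
  if h : I.Nonempty ∧ J.Nonempty ∧ I.card = J.card then
    let p := I.card
    let row : ℕ → Fin m := fun s => (I.sort (· ≤ ·)).getD (p - 1 - s) (I.min' h.1)
    let col : ℕ → Fin n := fun s => (J.sort (· ≤ ·)).getD s (J.min' h.2.1)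
    T (row 0) (col 0) *
      ∏ s ∈ Finset.range (p - 1),
        ((T (row (s + 1)) (col s))⁻¹ * T (row (s + 1)) (col (s + 1)))
  else 0

/-- The L-path-sum matrix `X_L(T)`. -/
noncomputable def XL {m n : ℕ} (T : Matrix (Fin m) (Fin n) ℝ) :
    Matrix (Fin m) (Fin n) ℝ :=
  Matrix.of fun i j =>
    ∑ I ∈ Finset.univ.filter (fun I : Finset (Fin m) => I.max = (i : WithBot (Fin m))),
      ∑ J ∈ Finset.univ.filter (fun J : Finset (Fin n) =>
          J.max = (j : WithBot (Fin n)) ∧ J.card = I.card),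
        lWeight T I J

/-- The set of internal vertices traversed by the Γ-path encoded by `(I, J)`:
horizontal segments `{(i_s, b) : j_s ≤ b ≤ j_{s-1}}` (with `j₀` interpreted as the last
column) and vertical segments `{(a, j_s) : i_s ≤ a ≤ i_{s+1}}` (with `i_{p+1}` interpreted
as the last row). -/
def pathVerts {m n : ℕ} (I : Finset (Fin m)) (J : Finset (Fin n)) :
    Finset (Fin m × Fin n) :=
  Finset.univ.filter fun v =>
    (∃ s ∈ Finset.range I.card,
        v.1 = (I.sort (· ≤ ·)).getD s v.1 ∧
        (J.sort (· ≤ ·)).getD (J.card - 1 - s) v.2 ≤ v.2 ∧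
        (s = 0 ∨ v.2 ≤ (J.sort (· ≤ ·)).getD (J.card - s) v.2)) ∨
    (∃ s ∈ Finset.range I.card,
        v.2 = (J.sort (· ≤ ·)).getD (J.card - 1 - s) v.2 ∧
        (I.sort (· ≤ ·)).getD s v.1 ≤ v.1 ∧
        (s + 1 = I.card ∨ v.1 ≤ (I.sort (· ≤ ·)).getD (s + 1) v.1))

/-- The sequence of matrices produced by Cauchon's Algorithm: `cauchonSeq X t` is the
matrix obtained after performing the first `t` steps, the steps being indexed by the
positions `(i,j) ∈ [m]×[n]` (1-based) in increasing reverse lexicographic order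
(`(m,n)` first); the step at 1-based position `(i,j)` is performed on `cauchonSeq X t`
with `t = (m−i)·n + (n−j)`, so that the matrix `X^{(i,j)}` of Cauchon's Algorithm is
`cauchonSeq X ((m−i)·n + (n−j))`. -/
noncomputable def cauchonSeq {m n : ℕ} (X : Matrix (Fin m) (Fin n) ℝ) :
    ℕ → Matrix (Fin m) (Fin n) ℝ
  | 0 => X
  | t + 1 =>
    let Y := cauchonSeq X t
    Matrix.of fun k l =>
      let i0 : Fin m := ⟨m - 1 - t / n,
        lt_of_le_of_lt (Nat.sub_le _ _) (by have := k.isLt; omega)⟩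
      let j0 : Fin n := ⟨n - 1 - t % n,
        lt_of_le_of_lt (Nat.sub_le _ _) (by have := l.isLt; omega)⟩
      if (k : ℕ) < (i0 : ℕ) ∧ (l : ℕ) < (j0 : ℕ) then
        Y k l - Y k j0 * (Y i0 j0)⁻¹ * Y i0 l
      else Y k l

/-- The output `T = X^{(1,1)}` of Cauchon's Algorithm. -/
noncomputable def cauchonOutput {m n : ℕ} (X : Matrix (Fin m) (Fin n) ℝ) :
    Matrix (Fin m) (Fin n) ℝ :=
  cauchonSeq X ((m - 1) * n + (n - 1))

/-- `contigMinorTL A i j` (1-based `i`, `j`) is the minor `det A[{i⋯},{j⋯}]` of the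
largest contiguous submatrix of `A` with top-left corner `(i,j)`, i.e. with rows
`i, …, i+k` and columns `j, …, j+k` where `k = min(M−i, N−j)`; it is `1` (the empty
determinant) if `(i,j)` is out of range. -/
noncomputable def contigMinorTL {M N : ℕ} (A : Matrix (Fin M) (Fin N) ℝ) (i j : ℕ) : ℝ :=
  if h : 1 ≤ i ∧ i ≤ M ∧ 1 ≤ j ∧ j ≤ N then
    (A.submatrix
      (fun s : Fin (min (M - i) (N - j) + 1) =>
        (⟨i - 1 + (s : ℕ), by have := s.isLt; omega⟩ : Fin M))
      (fun s : Fin (min (M - i) (N - j) + 1) =>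
        (⟨j - 1 + (s : ℕ), by have := s.isLt; omega⟩ : Fin N))).det
  else 1

/-- `borderMinorTL A i₀ j₀ i j` (1-based indices, `i₀ < i`, `j₀ < j`) is the minor
`det A[{i₀, i⋯},{j₀, j⋯}]` with rows `{i₀} ∪ {i, …, i+k}` and columns
`{j₀} ∪ {j, …, j+k}` where `k = min(M−i, N−j)`; when the contiguous part is out of range
(`i > M` or `j > N`) it is the single entry `A[{i₀},{j₀}]`, and it is `1` if `(i₀,j₀)`
is out of range. -/
noncomputable def borderMinorTL {M N : ℕ} (A : Matrix (Fin M) (Fin N) ℝ)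
    (i₀ j₀ i j : ℕ) : ℝ :=
  if h : 1 ≤ i₀ ∧ i₀ ≤ M ∧ 1 ≤ j₀ ∧ j₀ ≤ N then
    if h2 : i₀ < i ∧ i ≤ M ∧ j₀ < j ∧ j ≤ N then
      (A.submatrix
        (fun s : Fin (min (M - i) (N - j) + 2) =>
          if (s : ℕ) = 0 then (⟨i₀ - 1, by omega⟩ : Fin M)
          else ⟨i - 1 + ((s : ℕ) - 1), by have := s.isLt; omega⟩)
        (fun s : Fin (min (M - i) (N - j) + 2) =>
          if (s : ℕ) = 0 then (⟨j₀ - 1, by omega⟩ : Fin N)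
          else ⟨j - 1 + ((s : ℕ) - 1), by have := s.isLt; omega⟩)).det
    else A ⟨i₀ - 1, by omega⟩ ⟨j₀ - 1, by omega⟩
  else 1

/-- `borderMinorBR A i j i₀ j₀` (1-based indices, `i < i₀`, `j < j₀`) is the minor
`det A[{⋯i, i₀},{⋯j, j₀}]` with rows `{i−k, …, i} ∪ {i₀}` and columns
`{j−k, …, j} ∪ {j₀}` where `k = min(i−1, j−1)`; when the contiguous part is empty
(`i = 0` or `j = 0`) it is the single entry `A[{i₀},{j₀}]`, and it is `1` if `(i₀,j₀)`
is out of range. -/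
noncomputable def borderMinorBR {M N : ℕ} (A : Matrix (Fin M) (Fin N) ℝ)
    (i j i₀ j₀ : ℕ) : ℝ :=
  if h : 1 ≤ i₀ ∧ i₀ ≤ M ∧ 1 ≤ j₀ ∧ j₀ ≤ N then
    if h2 : 1 ≤ i ∧ i < i₀ ∧ 1 ≤ j ∧ j < j₀ then
      (A.submatrix
        (fun s : Fin (min (i - 1) (j - 1) + 2) =>
          if (s : ℕ) = min (i - 1) (j - 1) + 1 then (⟨i₀ - 1, by omega⟩ : Fin M)
          else ⟨i - 1 - min (i - 1) (j - 1) + (s : ℕ), by have := s.isLt; omega⟩)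
        (fun s : Fin (min (i - 1) (j - 1) + 2) =>
          if (s : ℕ) = min (i - 1) (j - 1) + 1 then (⟨j₀ - 1, by omega⟩ : Fin N)
          else ⟨j - 1 - min (i - 1) (j - 1) + (s : ℕ), by have := s.isLt; omega⟩)).det
    else A ⟨i₀ - 1, by omega⟩ ⟨j₀ - 1, by omega⟩
  else 1

/-! ### Weights of Γ-paths -/

/-- The weight of a Γ-path in terms of any enumerations of its turns; outside the range of the
turns the enumerations are arbitrary, so the default values in `gammaWeight` do not matter. -/
theorem gammaWeight_eq {m n : ℕ} (T : Matrix (Fin m) (Fin n) ℝ) (I : Finset (Fin m))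
    (J : Finset (Fin n)) (hI : I.Nonempty) (hc : I.card = J.card)
    (row : ℕ → Fin m) (col : ℕ → Fin n)
    (hrow : ∀ s < I.card, (I.sort (· ≤ ·))[s]? = some (row s))
    (hcol : ∀ s < I.card, (J.sort (· ≤ ·))[I.card - 1 - s]? = some (col s)) :
    gammaWeight T I J = T (row 0) (col 0) * ∏ s ∈ Finset.range (I.card - 1),
        ((T (row (s + 1)) (col s))⁻¹ * T (row (s + 1)) (col (s + 1))) := by
  have hp : 0 < I.card := hI.card_pos
  have hJ : J.Nonempty := by rw [← Finset.card_pos]; omega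
  unfold gammaWeight
  rw [dif_pos ⟨hI, hJ, hc⟩]
  simp only [List.getD_eq_getElem?_getD]
  rw [hrow 0 hp, hcol 0 hp]
  congr 1
  refine Finset.prod_congr rfl fun s hs => ?_
  rw [Finset.mem_range] at hs
  rw [hrow (s + 1) (by omega), hcol s (by omega), hcol (s + 1) (by omega)]
  rfl

theorem sort_insert_top {m : ℕ} (I : Finset (Fin m)) (i : Fin m) (h : ∀ x ∈ I, x < i) :
    (insert i I).sort (· ≤ ·) = I.sort (· ≤ ·) ++ [i] := by
  have hi : i ∉ I := fun hi => lt_irrefl _ (h i hi)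
  refine List.Perm.eq_of_pairwise' (r := (· ≤ ·)) (Finset.pairwise_sort _ _) ?_ ?_
  · rw [List.pairwise_append]
    refine ⟨Finset.pairwise_sort _ _, by simp, ?_⟩
    intro a ha b hb
    simp at ha hb
    subst hb
    exact (h a ha).le
  · rw [← Multiset.coe_eq_coe, Finset.sort_eq, Finset.insert_val_of_notMem hi,
      ← Multiset.coe_add, Finset.sort_eq, add_comm]
    rfl

/-- Appending one Γ-turn `(i, l)`, below and to the left of all previous turns, multiplies the
weight by `t_{ij}⁻¹ t_{il}`, where `j` is the column of the previous last turn. -/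
theorem gammaWeight_insert {m n : ℕ} (T : Matrix (Fin m) (Fin n) ℝ) (I : Finset (Fin m))
    (J : Finset (Fin n)) (i : Fin m) (j l : Fin n) (hI : I.Nonempty) (hc : J.card = I.card)
    (hi : ∀ x ∈ I, x < i) (hj : J.min = (j : WithTop (Fin n))) (hl : l < j) :
    gammaWeight T (insert i I) (insert l J) = gammaWeight T I J * ((T i j)⁻¹ * T i l) := by
  have hp : 0 < I.card := hI.card_pos
  have hiI : i ∉ I := fun h => lt_irrefl _ (hi i h)
  have hJl : ∀ x ∈ J, l < x := fun x hx => hl.trans_le (Finset.min_le_of_eq hx hj)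
  have hlJ : l ∉ J := fun h => lt_irrefl _ (hJl l h)
  have hcI : (insert i I).card = I.card + 1 := Finset.card_insert_of_notMem hiI
  have hcJ : (insert l J).card = J.card + 1 := Finset.card_insert_of_notMem hlJ
  have hsI := sort_insert_top I i hi
  have hsJ : (insert l J).sort (· ≤ ·) = l :: J.sort (· ≤ ·) :=
    Finset.sort_insert (r := (· ≤ ·)) (fun b hb => (hJl b hb).le) hlJ
  have hlenI : (I.sort (· ≤ ·)).length = I.card := Finset.length_sort _
  have hlenJ : (J.sort (· ≤ ·)).length = J.card := Finset.length_sort _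
  have hlast : (J.sort (· ≤ ·))[0]? = some j := by
    have hJ : J.Nonempty := by rw [← Finset.card_pos]; omega
    have h0 := Finset.sorted_zero_eq_min'_aux J (by rw [hlenJ]; omega) hJ
    rw [List.getElem?_eq_getElem (by rw [hlenJ]; omega), Option.some_inj]
    refine Eq.trans (by simpa using h0) ?_
    have := Finset.coe_min' hJ
    rw [hj] at this
    exact_mod_cast this
  -- These enumerate the turns of the extended path; since the columns are listed in decreasing
  -- order, their restrictions to `s < I.card` enumerate the turns of the original path.
  set row : ℕ → Fin m := fun s => ((insert i I).sort (· ≤ ·)).getD s i with hrow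
  set col : ℕ → Fin n := fun s => ((insert l J).sort (· ≤ ·)).getD (I.card - s) l with hcol
  have hrow' : ∀ s, s < I.card + 1 → ((insert i I).sort (· ≤ ·))[s]? = some (row s) := by
    intro s hs
    rw [hrow]
    simp only [List.getD_eq_getElem?_getD]
    rw [List.getElem?_eq_getElem (by rw [Finset.length_sort, hcI]; exact hs)]
    rfl
  have hcol' : ∀ s, s < I.card + 1 →
      ((insert l J).sort (· ≤ ·))[I.card - s]? = some (col s) := by
    intro s hs
    rw [hcol]
    simp only [List.getD_eq_getElem?_getD]
    rw [List.getElem?_eq_getElem (by rw [Finset.length_sort, hcJ]; omega)]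
    rfl
  have hrow2 : ∀ s, s < I.card → (I.sort (· ≤ ·))[s]? = some (row s) := by
    intro s hs
    rw [← hrow' s (by omega), hsI, List.getElem?_append_left (by omega)]
  have hcol2 : ∀ s, s < I.card → (J.sort (· ≤ ·))[I.card - 1 - s]? = some (col s) := by
    intro s hs
    rw [← hcol' s (by omega), hsJ, show I.card - s = (I.card - 1 - s) + 1 by omega,
      List.getElem?_cons_succ]
  have hri : row I.card = i := by
    have := hrow' I.card (by omega)
    rw [hsI, List.getElem?_append_right (by omega), hlenI] at this
    simpa using this.symm
  have hcl : col I.card = l := by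
    have := hcol' I.card (by omega)
    rw [hsJ] at this
    simpa using this.symm
  have hcj : col (I.card - 1) = j := by
    have := hcol2 (I.card - 1) (by omega)
    rw [Nat.sub_self, hlast] at this
    simpa using this.symm
  rw [gammaWeight_eq T _ _ (Finset.insert_nonempty _ _) (by omega) row col
      (fun s hs => hrow' s (by omega))
      (fun s hs => by rw [hcI, Nat.add_sub_cancel]; exact hcol' s (by omega)),
    gammaWeight_eq T I J hI hc.symm row col hrow2 hcol2, hcI, Nat.add_sub_cancel]
  obtain ⟨p, hpp⟩ : ∃ p, I.card = p + 1 := ⟨I.card - 1, by omega⟩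
  rw [hpp] at hri hcl hcj ⊢
  rw [Nat.add_sub_cancel] at hcj ⊢
  rw [Finset.prod_range_succ, hri, hcl, hcj, mul_assoc]

theorem gammaWeight_singleton {m n : ℕ} (T : Matrix (Fin m) (Fin n) ℝ) (i : Fin m)
    (j : Fin n) : gammaWeight T {i} {j} = T i j := by
  rw [gammaWeight_eq T {i} {j} (by simp) (by simp) (fun _ => i) (fun _ => j)] <;> simp

/-! ### Recurrence for truncated path sums -/

/-- The total weight of the Γ-paths ending at column `l` whose set of turn rows is `I`. -/
noncomputable def rowSetSum {m n : ℕ} (T : Matrix (Fin m) (Fin n) ℝ) (I : Finset (Fin m))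
    (l : Fin n) : ℝ :=
  ∑ J ∈ Finset.univ.filter (fun J : Finset (Fin n) =>
    J.min = (l : WithTop (Fin n)) ∧ J.card = I.card), gammaWeight T I J

/-- The total weight of the Γ-paths from row `k` to column `l` that only turn in rows above
row `c` (0-based). -/
noncomputable def truncSum {m n : ℕ} (T : Matrix (Fin m) (Fin n) ℝ) (c : ℕ) (k : Fin m)
    (l : Fin n) : ℝ :=
  ∑ I ∈ Finset.univ.filter (fun I : Finset (Fin m) =>
    I.min = (k : WithTop (Fin m)) ∧ ∀ x ∈ I, (x : ℕ) < c), rowSetSum T I l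

/-- Removing the last turn `(i, l)` leaves a path with turn rows `I` that ends at some column
`j > l`. -/
theorem rowSetSum_insert {m n : ℕ} (T : Matrix (Fin m) (Fin n) ℝ) (I : Finset (Fin m))
    (i : Fin m) (l : Fin n) (hI : I.Nonempty) (hi : ∀ x ∈ I, x < i) :
    rowSetSum T (insert i I) l =
      ∑ j ∈ Finset.univ.filter (fun j => l < j), rowSetSum T I j * ((T i j)⁻¹ * T i l) := by
  have hiI : i ∉ I := fun h => lt_irrefl _ (hi i h)
  have hcI : (insert i I).card = I.card + 1 := Finset.card_insert_of_notMem hiI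
  have hp : 0 < I.card := hI.card_pos
  unfold rowSetSum
  simp_rw [Finset.sum_mul]
  rw [Finset.sum_sigma']
  symm
  have key : ∀ (j : Fin n) (J : Finset (Fin n)), l < j → J.min = (j : WithTop (Fin n)) →
      ∀ x ∈ J, l < x := fun j J h1 h2 x hx => h1.trans_le (Finset.min_le_of_eq hx h2)
  refine Finset.sum_nbij (fun p => insert l p.2) ?_ ?_ ?_ ?_
  · rintro ⟨j, J⟩ h
    simp only [Finset.mem_sigma, Finset.mem_filter, Finset.mem_univ, true_and] at h ⊢
    obtain ⟨h1, h2, h3⟩ := h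
    refine ⟨?_, ?_⟩
    · rw [Finset.min_insert, h2]
      exact min_eq_left (by exact_mod_cast h1.le)
    · rw [Finset.card_insert_of_notMem fun h => lt_irrefl _ (key j J h1 h2 l h), hcI, h3]
  · rintro ⟨j, J⟩ h ⟨j', J'⟩ h' heq
    simp only [Finset.coe_sigma, Set.mem_sigma_iff, Finset.mem_coe, Finset.mem_filter,
      Finset.mem_univ, true_and] at h h'
    dsimp only at heq
    have hJ : J = J' := by
      rw [← Finset.erase_insert (fun hh => lt_irrefl _ (key j J h.1 h.2.1 l hh)), heq,
        Finset.erase_insert (fun hh => lt_irrefl _ (key j' J' h'.1 h'.2.1 l hh))]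
    subst hJ
    have : j = j' := by
      have := h.2.1.symm.trans h'.2.1
      exact_mod_cast this
    subst this
    rfl
  · intro J hJ
    simp only [Finset.mem_coe, Finset.mem_filter, Finset.mem_univ, true_and] at hJ
    obtain ⟨h1, h2⟩ := hJ
    have hlJ : l ∈ J := Finset.mem_of_min h1
    have hce := Finset.card_erase_of_mem hlJ
    have hne : (J.erase l).Nonempty := by rw [← Finset.card_pos]; omega
    obtain ⟨j, hj⟩ := Finset.min_of_nonempty hne
    have hjm := Finset.mem_of_min hj
    rw [Finset.mem_erase] at hjm
    refine ⟨⟨j, J.erase l⟩, ?_, Finset.insert_erase hlJ⟩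
    simp only [Finset.coe_sigma, Set.mem_sigma_iff, Finset.mem_coe, Finset.mem_filter,
      Finset.mem_univ, true_and]
    exact ⟨lt_of_le_of_ne (Finset.min_le_of_eq hjm.2 h1) (Ne.symm hjm.1), hj, by omega⟩
  · rintro ⟨j, J⟩ h
    simp only [Finset.mem_sigma, Finset.mem_filter, Finset.mem_univ, true_and] at h
    exact (gammaWeight_insert T I J i j l hI h.2.2 hi h.2.1 h.1).symm

theorem rowSetSum_singleton {m n : ℕ} (T : Matrix (Fin m) (Fin n) ℝ) (k : Fin m)
    (l : Fin n) : rowSetSum T {k} l = T k l := by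
  unfold rowSetSum
  rw [show Finset.univ.filter (fun J : Finset (Fin n) =>
    J.min = (l : WithTop (Fin n)) ∧ J.card = ({k} : Finset (Fin m)).card) = {{l}} from ?_]
  · rw [Finset.sum_singleton, gammaWeight_singleton]
  · ext J
    simp only [Finset.mem_filter, Finset.mem_univ, true_and, Finset.card_singleton,
      Finset.mem_singleton]
    constructor
    · rintro ⟨h1, h2⟩
      obtain ⟨a, rfl⟩ := Finset.card_eq_one.1 h2
      have := Finset.mem_of_min h1
      rw [Finset.mem_singleton] at this
      rw [this]
    · rintro rfl
      simp

theorem truncSum_base {m n : ℕ} (T : Matrix (Fin m) (Fin n) ℝ) (k : Fin m) (l : Fin n) :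
    truncSum T (k + 1) k l = T k l := by
  unfold truncSum
  rw [show Finset.univ.filter (fun I : Finset (Fin m) =>
    I.min = (k : WithTop (Fin m)) ∧ ∀ x ∈ I, (x : ℕ) < k + 1) = {{k}} from ?_]
  · rw [Finset.sum_singleton, rowSetSum_singleton]
  · ext I
    simp only [Finset.mem_filter, Finset.mem_univ, true_and, Finset.mem_singleton]
    constructor
    · rintro ⟨h1, h2⟩
      refine Finset.eq_singleton_iff_unique_mem.2 ⟨Finset.mem_of_min h1, fun x hx => ?_⟩
      have h3 : k ≤ x := Finset.min_le_of_eq hx h1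
      exact le_antisymm (Fin.le_def.2 (Nat.lt_succ_iff.1 (h2 x hx))) h3
    · rintro rfl
      simp

/-- Splitting the paths according to whether they turn in row `i`; if they do, the last turn is
`(i, l)`, and removing it leaves a path that ends at some column `j > l`. -/
theorem truncSum_succ {m n : ℕ} (T : Matrix (Fin m) (Fin n) ℝ) (i k : Fin m) (l : Fin n)
    (hk : k < i) :
    truncSum T (i + 1) k l = truncSum T i k l +
      ∑ j ∈ Finset.univ.filter (fun j => l < j), truncSum T i k j * ((T i j)⁻¹ * T i l) := by
  unfold truncSum
  simp_rw [Finset.sum_mul]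
  rw [Finset.sum_comm, ← Finset.sum_filter_not_add_sum_filter _ (fun I => i ∈ I)]
  congr 1
  · refine Finset.sum_congr ?_ fun _ _ => rfl
    ext I
    simp only [Finset.mem_filter, Finset.mem_univ, true_and]
    constructor
    · rintro ⟨⟨h1, h2⟩, h3⟩
      refine ⟨h1, fun x hx => ?_⟩
      have : x ≠ i := fun h => h3 (h ▸ hx)
      have := Fin.val_ne_of_ne this
      have := h2 x hx
      omega
    · rintro ⟨h1, h2⟩
      exact ⟨⟨h1, fun x hx => (h2 x hx).trans (Nat.lt_succ_self _)⟩,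
        fun h => lt_irrefl _ (h2 i h)⟩
  · symm
    refine Finset.sum_nbij' (fun I => insert i I) (fun I => I.erase i) ?_ ?_ ?_ ?_ ?_
    · intro I h
      simp only [Finset.mem_filter, Finset.mem_univ, true_and] at h ⊢
      obtain ⟨h1, h2⟩ := h
      refine ⟨⟨?_, ?_⟩, Finset.mem_insert_self _ _⟩
      · rw [Finset.min_insert, h1]
        exact min_eq_right (by exact_mod_cast hk.le)
      · intro x hx
        rcases Finset.mem_insert.1 hx with rfl | hx
        · exact Nat.lt_succ_self _
        · exact (h2 x hx).trans (Nat.lt_succ_self _)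
    · intro I h
      simp only [Finset.mem_filter, Finset.mem_univ, true_and] at h ⊢
      obtain ⟨⟨h1, h2⟩, h3⟩ := h
      refine ⟨?_, ?_⟩
      · have hkI : k ∈ I.erase i := Finset.mem_erase.2 ⟨hk.ne, Finset.mem_of_min h1⟩
        refine le_antisymm (Finset.min_le hkI) ?_
        rw [← h1]
        exact Finset.min_mono (Finset.erase_subset _ _)
      · intro x hx
        rw [Finset.mem_erase] at hx
        have := Fin.val_ne_of_ne hx.1
        have := h2 x hx.2
        omega
    · intro I h
      simp only [Finset.mem_filter, Finset.mem_univ, true_and] at h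
      exact Finset.erase_insert fun hh => lt_irrefl _ (h.2 i hh)
    · intro I h
      simp only [Finset.mem_filter, Finset.mem_univ, true_and] at h
      exact Finset.insert_erase h.2
    · intro I h
      simp only [Finset.mem_filter, Finset.mem_univ, true_and] at h
      exact (rowSetSum_insert T I i l ⟨k, Finset.mem_of_min h.1⟩ h.2).symm

theorem truncSum_top {m n : ℕ} (T : Matrix (Fin m) (Fin n) ℝ) (k : Fin m) (l : Fin n) :
    truncSum T m k l = XGamma T k l := by
  simp [truncSum, XGamma, rowSetSum]

/-! ### Recurrence for Cauchon's Algorithm -/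

theorem cauchonSeq_succ {m n : ℕ} (X : Matrix (Fin m) (Fin n) ℝ) (t : ℕ) (i k : Fin m)
    (j l : Fin n) (hi : (i : ℕ) = m - 1 - t / n) (hj : (j : ℕ) = n - 1 - t % n) :
    cauchonSeq X (t + 1) k l =
      if k < i ∧ l < j then
        cauchonSeq X t k l - cauchonSeq X t k j * (cauchonSeq X t i j)⁻¹ * cauchonSeq X t i l
      else cauchonSeq X t k l := by
  obtain ⟨i, hi'⟩ := i
  obtain ⟨j, hj'⟩ := j
  dsimp only at hi hj
  subst hi hj
  rfl

/-- Step `t` changes only rows above row `m - 1 - t / n`, so row `k` is final once the rows below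
it have been processed. -/
theorem cauchonSeq_row_stable {m n : ℕ} (X : Matrix (Fin m) (Fin n) ℝ) (k : Fin m)
    (l : Fin n) (t : ℕ) (ht : (m - 1 - k) * n ≤ t) :
    cauchonSeq X t k l = cauchonSeq X ((m - 1 - k) * n) k l := by
  induction t, ht using Nat.le_induction with
  | base => rfl
  | succ t ht ih =>
    have hn : 0 < n := l.pos
    have hq : m - 1 - k ≤ t / n := (Nat.le_div_iff_mul_le hn).2 ht
    rw [cauchonSeq_succ X t ⟨m - 1 - t / n, by omega⟩ k ⟨n - 1 - t % n, by omega⟩ l rfl rfl,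
      if_neg, ih]
    rintro ⟨h, -⟩
    have := Fin.lt_def.1 h
    simp only at this
    omega

theorem cauchonOutput_eq {m n : ℕ} (X : Matrix (Fin m) (Fin n) ℝ) (k : Fin m)
    (l : Fin n) : cauchonOutput X k l = cauchonSeq X ((m - 1 - k) * n) k l :=
  cauchonSeq_row_stable X k l _
    ((Nat.mul_le_mul_right n (Nat.sub_le _ _)).trans (Nat.le_add_right _ _))

/-- While row `i` is processed, the step at column `j` changes only columns to the left
of `j`, so column `l` is final once the columns `j > l` have been used. -/
theorem cauchonSeq_col_stable {m n : ℕ} (X : Matrix (Fin m) (Fin n) ℝ) (k : Fin m)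
    (l : Fin n) (q s : ℕ) (hs : n - 1 - l ≤ s) (hsn : s ≤ n) :
    cauchonSeq X (q * n + s) k l = cauchonSeq X (q * n + (n - 1 - l)) k l := by
  induction s, hs using Nat.le_induction with
  | base => rfl
  | succ s hs ih =>
    have hn : 0 < n := l.pos
    have hm : 0 < m := k.pos
    have hmod : (q * n + s) % n = s := by
      rw [Nat.mul_comm, Nat.mul_add_mod, Nat.mod_eq_of_lt (by omega)]
    rw [← add_assoc, cauchonSeq_succ X (q * n + s) ⟨m - 1 - (q * n + s) / n, lt_of_le_of_lt (Nat.sub_le _ _) (by omega)⟩ k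
      ⟨n - 1 - s, by omega⟩ l rfl (by rw [hmod]), if_neg, ih (by omega)]
    rintro ⟨-, h⟩
    have := Fin.lt_def.1 h
    simp only at this
    omega

/-- Undoing the first `s` steps of Cauchon's Algorithm in row `i`, which are those at the columns
`j ≥ n - s`. -/
theorem cauchonSeq_partial_row {m n : ℕ} (X : Matrix (Fin m) (Fin n) ℝ) (i k : Fin m)
    (l : Fin n) (hk : k < i) (s : ℕ) (hs : s ≤ n) :
    cauchonSeq X ((m - 1 - i) * n) k l = cauchonSeq X ((m - 1 - i) * n + s) k l +
      ∑ j ∈ Finset.univ.filter (fun j : Fin n => l < j ∧ n ≤ j + s),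
        cauchonSeq X ((m - 1 - i) * n + n) k j *
          ((cauchonOutput X i j)⁻¹ * cauchonOutput X i l) := by
  induction s with
  | zero =>
    rw [Finset.filter_false_of_mem]
    · simp
    · rintro j - ⟨-, h⟩
      have := j.isLt
      omega
  | succ s ih =>
    have hn : 0 < n := l.pos
    have hmod : ((m - 1 - i) * n + s) % n = s := by
      rw [Nat.mul_comm, Nat.mul_add_mod, Nat.mod_eq_of_lt (by omega)]
    have hdiv : ((m - 1 - i) * n + s) / n = m - 1 - i := by
      rw [Nat.mul_comm, Nat.mul_add_div hn, Nat.div_eq_of_lt (by omega), add_zero]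
    have hrow : ∀ b, cauchonSeq X ((m - 1 - i) * n + s) i b = cauchonOutput X i b := by
      intro b
      rw [cauchonOutput_eq, cauchonSeq_row_stable X i b _ (Nat.le_add_right _ _)]
    -- the pivot column of the step that is being undone
    set j₀ : Fin n := ⟨n - 1 - s, by omega⟩ with hj₀
    have hcol : cauchonSeq X ((m - 1 - i) * n + s) k j₀ =
        cauchonSeq X ((m - 1 - i) * n + n) k j₀ := by
      rw [cauchonSeq_col_stable X k j₀ _ s (by simp only [hj₀]; omega) (by omega),
        cauchonSeq_col_stable X k j₀ _ n (by simp only [hj₀]; omega) le_rfl]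
    rw [ih (by omega), ← add_assoc, cauchonSeq_succ X ((m - 1 - i) * n + s) i k j₀ l
      (by rw [hdiv]; omega) (by rw [hmod]), hrow, hrow, hcol]
    by_cases hl : l < j₀
    · rw [if_pos ⟨hk, hl⟩, show Finset.univ.filter (fun j : Fin n => l < j ∧ n ≤ j + (s + 1)) =
        insert j₀ (Finset.univ.filter (fun j : Fin n => l < j ∧ n ≤ j + s)) from ?_,
        Finset.sum_insert]
      · ring
      · simp only [Finset.mem_filter, Finset.mem_univ, true_and, hj₀]
        omega
      · ext j
        simp only [Finset.mem_filter, Finset.mem_univ, true_and, Finset.mem_insert, hj₀,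
          Fin.ext_iff, Fin.lt_def] at hl ⊢
        omega
    · rw [if_neg fun h => hl h.2]
      congr 2
      ext j
      simp only [Finset.mem_filter, Finset.mem_univ, true_and, hj₀, Fin.lt_def] at hl ⊢
      omega

/-- Undoing the `n` steps of Cauchon's Algorithm in row `i`. -/
theorem cauchonSeq_full_row {m n : ℕ} (X : Matrix (Fin m) (Fin n) ℝ) (i k : Fin m)
    (l : Fin n) (hk : k < i) :
    cauchonSeq X ((m - (i + 1)) * n) k l = cauchonSeq X ((m - i) * n) k l +
      ∑ j ∈ Finset.univ.filter (fun j : Fin n => l < j),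
        cauchonSeq X ((m - i) * n) k j *
          ((cauchonOutput X i j)⁻¹ * cauchonOutput X i l) := by
  have h1 : m - (i + 1) = m - 1 - i := by omega
  have h2 : (m - i) * n = (m - 1 - i) * n + n := by
    rw [show m - i = m - 1 - i + 1 by omega, Nat.succ_mul]
  rw [h1, h2, cauchonSeq_partial_row X i k l hk n le_rfl]
  simp

theorem truncSum_cauchonOutput {m n : ℕ} (X : Matrix (Fin m) (Fin n) ℝ) (k : Fin m)
    (c : ℕ) (hc : k + 1 ≤ c) (hcm : c ≤ m) (l : Fin n) :
    truncSum (cauchonOutput X) c k l = cauchonSeq X ((m - c) * n) k l := by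
  induction c, hc using Nat.le_induction generalizing l with
  | base =>
    rw [truncSum_base, cauchonOutput_eq, show m - (k + 1) = m - 1 - k by omega]
  | succ c hc ih =>
    have hk : k < (⟨c, hcm⟩ : Fin m) := hc
    have h1 := truncSum_succ (cauchonOutput X) ⟨c, hcm⟩ k l hk
    have h2 := cauchonSeq_full_row X ⟨c, hcm⟩ k l hk
    simp only [ih (by omega)] at h1
    rw [h1, h2]

/-- the output of Cauchon's Algorithm applied to a totally positive matrix
`X` is the Γ-scaffolding of `X`. -/
theorem cauchon_output_is_gammaScaffolding {m n : ℕ} (X : Matrix (Fin m) (Fin n) ℝ)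
    (hX : TotallyPositive X) : XGamma (cauchonOutput X) = X := by
  ext k l
  rw [← truncSum_top, truncSum_cauchonOutput X k m k.isLt le_rfl l, Nat.sub_self, Nat.zero_mul]
  rfl
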